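/- Let n ≥ 1, d ∈ ℕ be even, and let f : ℝⁿ → [0,+∞) be an integrable log-concave function with 0 < ∫_{ℝⁿ} f(x) dx, ‖f‖_∞ = f(0) = 1. Then there exist t₁ ∈ [1,+∞) and a nonnegative homogeneous polynomial g₁ of degree d on ℝⁿ with |G₁(g₁)| < +∞ such that f(x) ≤ t₁·exp(−g₁(x)^{1/d}) for all x ∈ ℝⁿ, and for every t ≥ 1 and every nonnegative homogeneous polynomial g of degree d on ℝⁿ satisfying f(x) ≤ t·exp(−g(x)^{1/d}) for all x ∈ ℝⁿ, one has t₁·∫_{ℝⁿ} exp(−g₁(x)^{1/d}) dx ≤ t·∫_{ℝⁿ} exp(−g(x)^{1/d}) dx. -/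

import Mathlib

open MeasureTheory

noncomputable section

/-- `G₁(g) = {x ∈ ℝⁿ : g(x) ≤ 1}`, the sublevel set of a polynomial at level 1. -/
def G1 {n : ℕ} (g : MvPolynomial (Fin n) ℝ) : Set (Fin n → ℝ) :=
  {x | MvPolynomial.eval x g ≤ 1}

/-!
For `d > 0`, the pairs `(t, g)` with `g` a nonnegative form of degree `d` satisfying
`f ≤ t * exp (-g ^ (1 / d))` form a closed subset of a finite-dimensional space, on which
`t * ∫ exp (-g ^ (1 / d))` is lower semicontinuous by Fatou's lemma. A minimizer exists because this
functional is finite somewhere and coercive. Finiteness: an integrable log-concave function decays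
exponentially, so it is dominated by a pair whose `g` is a multiple of `∑ xᵢ ^ d`. Coercivity: `f`
is bounded below by some `δ > 0` on a ball, where therefore `g ≤ log (t / δ) ^ d`; hence the
integral decays at most like a power of `log t`, and its product with `t` tends to infinity with
`t`, while bounded `t` forces bounded `g`.
-/

open Bornology Filter Metric MvPolynomial Set Topology

section ConvexSets

variable {E : Type*} [NormedAddCommGroup E] [NormedSpace ℝ E]

theorem exists_mem_ball_midpoint_eq {x y z : E} {r : ℝ} (hz : z ∈ ball (midpoint ℝ x y) (r / 2)) :
    ∃ w ∈ ball y r, midpoint ℝ x w = z := by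
  refine ⟨Equiv.pointReflection z x, ?_, midpoint_pointReflection_right z x⟩
  have hsub : Equiv.pointReflection z x - y = (2 : ℝ) • (z - midpoint ℝ x y) := by
    rw [Equiv.pointReflection_apply, midpoint_eq_smul_add, vsub_eq_sub, vadd_eq_add, invOf_eq_inv]
    module
  rw [mem_ball_iff_norm] at hz ⊢
  rw [hsub, norm_smul, Real.norm_two]
  linarith

variable [FiniteDimensional ℝ E] [MeasurableSpace E] [BorelSpace E]
  {μ : Measure E} [μ.IsAddHaarMeasure]

-- A far point `x ∈ K` gives a ball of fixed radius in `K` around the midpoint of `x` and `y`,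
-- which contradicts tightness of `μ` restricted to `K`.
theorem isBounded_of_convex_of_measure_ne_top {K : Set E} (hK : Convex ℝ K)
    (hint : (interior K).Nonempty) (hμ : μ K ≠ ⊤) : IsBounded K := by
  obtain ⟨y, hy⟩ := hint
  obtain ⟨r, hr, hball⟩ := nhds_basis_ball.mem_iff.1 (mem_interior_iff_mem_nhds.1 hy)
  have : IsFiniteMeasure (μ.restrict K) := ⟨by simpa using hμ.lt_top⟩
  have htight : Tendsto (fun R => μ.restrict K {z | R < ‖z‖}) atTop (𝓝 0) := by
    simpa using tendsto_measure_norm_gt_of_isTightMeasureSet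
      (isTightMeasureSet_singleton (μ := μ.restrict K))
  have hpos : 0 < μ (ball 0 (r / 2)) := measure_ball_pos μ 0 (half_pos hr)
  obtain ⟨R, hR⟩ := (htight.eventually_lt_const hpos).exists
  refine isBounded_iff_forall_norm_le.2 ⟨‖y‖ + 2 * R + r, fun x hx => ?_⟩
  by_contra! hfar
  have hsub : ball (midpoint ℝ x y) (r / 2) ⊆ {z | R < ‖z‖} ∩ K := by
    intro z hz
    obtain ⟨w, hw, rfl⟩ := exists_mem_ball_midpoint_eq hz
    refine ⟨?_, hK.midpoint_mem hx (hball hw)⟩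
    have hx_le : ‖x‖ ≤ ‖x + w‖ + ‖w‖ := by simpa using norm_sub_le (x + w) w
    have hw_le : ‖w‖ < ‖y‖ + r := by simpa [add_comm] using norm_lt_of_mem_ball hw
    have hmid : ‖midpoint ℝ x w‖ = ‖x + w‖ / 2 := by
      rw [midpoint_eq_smul_add, norm_smul, invOf_eq_inv]; norm_num; ring
    rw [mem_ofPred_eq, hmid]
    linarith
  refine hR.not_ge ?_
  calc μ (ball 0 (r / 2)) = μ (ball (midpoint ℝ x y) (r / 2)) :=
        (μ.addHaar_ball_center _ _).symm
    _ ≤ μ ({z | R < ‖z‖} ∩ K) := measure_mono hsub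
    _ = μ.restrict K {z | R < ‖z‖} :=
        (Measure.restrict_apply (measurableSet_lt measurable_const measurable_norm)).symm

end ConvexSets

/-- A function `f : E → [0, ∞)` with `f ((1 - θ) x + θ y) ≥ f x ^ (1 - θ) * f y ^ θ` for
`θ ∈ [0, 1]`, encoded as a nonnegative real-valued function. -/
structure LogConcave {E : Type*} [AddCommGroup E] [Module ℝ E] (f : E → ℝ) : Prop where
  nonneg : ∀ x, 0 ≤ f x
  rpow_mul_rpow_le : ∀ x y : E, ∀ θ : ℝ, 0 ≤ θ → θ ≤ 1 →
    f x ^ (1 - θ) * f y ^ θ ≤ f ((1 - θ) • x + θ • y)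

namespace LogConcave

section Module

variable {E : Type*} [AddCommGroup E] [Module ℝ E] {f : E → ℝ}

theorem convex_superlevel (hf : LogConcave f) (s : ℝ) : Convex ℝ {x | s ≤ f x} := by
  rcases le_or_gt s 0 with hs | hs
  · simpa only [fun x => hs.trans (hf.nonneg x), ofPred_true] using convex_univ
  intro x (hx : s ≤ f x) y (hy : s ≤ f y) a b _ hb hab
  obtain rfl : a = 1 - b := by linarith
  calc s = s ^ (1 - b) * s ^ b := by rw [← Real.rpow_add hs, sub_add_cancel, Real.rpow_one]
    _ ≤ f x ^ (1 - b) * f y ^ b := by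
      have := hf.nonneg x
      gcongr
    _ ≤ f ((1 - b) • x + b • y) := hf.rpow_mul_rpow_le x y b hb (by linarith)

theorem sqrt_mul_le (hf : LogConcave f) (x y : E) : √(f x * f y) ≤ f (midpoint ℝ x y) := by
  have h := hf.rpow_mul_rpow_le x y 2⁻¹ (by norm_num) (by norm_num)
  rw [show (1 : ℝ) - 2⁻¹ = 2⁻¹ by norm_num, ← Real.mul_rpow (hf.nonneg x) (hf.nonneg y),
    ← smul_add] at h
  rwa [Real.sqrt_eq_rpow, one_div, midpoint_eq_smul_add, invOf_eq_inv]

end Module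

variable {E : Type*} [NormedAddCommGroup E] [NormedSpace ℝ E] {f : E → ℝ}

theorem le_mul_exp_neg_of_le_norm_sub (hf : LogConcave f) {y : E} {S : ℝ} (hy : 0 < f y)
    (hS : 0 < S) (hsphere : ∀ z ∈ sphere y S, f z ≤ f y * Real.exp (-1)) {x : E}
    (hx : S ≤ ‖x - y‖) : f x ≤ f y * Real.exp (-(S⁻¹ * ‖x - y‖)) := by
  have hx0 : 0 < ‖x - y‖ := hS.trans_le hx
  set θ := S / ‖x - y‖
  have hθ : 0 < θ := div_pos hS hx0
  have hz : (1 - θ) • y + θ • x ∈ sphere y S := by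
    rw [mem_sphere_iff_norm, show (1 - θ) • y + θ • x - y = θ • (x - y) by module, norm_smul,
      Real.norm_of_nonneg hθ.le, div_mul_cancel₀ _ hx0.ne']
  have hle : f y ^ (1 - θ) * f x ^ θ ≤ f y * Real.exp (-1) :=
    (hf.rpow_mul_rpow_le y x θ hθ.le ((div_le_one hx0).2 hx)).trans (hsphere _ hz)
  have hratio : (f x / f y) ^ θ ≤ Real.exp (-1) := by
    rw [Real.div_rpow (hf.nonneg x) hy.le, div_le_iff₀ (by positivity)]
    rw [Real.rpow_sub hy, Real.rpow_one, div_mul_eq_mul_div, div_le_iff₀ (by positivity)] at hle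
    nlinarith
  have hroot : f x / f y ≤ Real.exp (-1) ^ θ⁻¹ :=
    (Real.le_rpow_inv_iff_of_pos (div_nonneg (hf.nonneg x) hy.le) (Real.exp_pos _).le hθ).2 hratio
  rwa [div_le_iff₀' hy, ← Real.exp_mul, inv_div, div_eq_inv_mul, neg_one_mul] at hroot

variable [FiniteDimensional ℝ E] [MeasurableSpace E] [BorelSpace E]
  {μ : Measure E} [μ.IsAddHaarMeasure]

theorem exists_closedBall_subset_superlevel (hf : LogConcave f) (hne : ¬ f =ᵐ[μ] 0) :
    ∃ δ > 0, ∃ y, ∃ r > 0, closedBall y r ⊆ {x | δ ≤ f x} := by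
  have hpos : ¬ ∀ᵐ x ∂μ, f x ≤ 0 := fun h => hne (h.mono fun x hx => hx.antisymm (hf.nonneg x))
  rw [ae_le_const_iff_forall_gt_measure_zero] at hpos
  push Not at hpos
  obtain ⟨δ, hδ, hμ⟩ := hpos
  rw [← measure_interior_of_null_frontier ((hf.convex_superlevel δ).addHaar_frontier μ)] at hμ
  obtain ⟨y, hy⟩ := nonempty_of_measure_ne_zero hμ
  obtain ⟨r, hr, hball⟩ := nhds_basis_closedBall.mem_iff.1 (mem_interior_iff_mem_nhds.1 hy)
  exact ⟨δ, hδ, y, r, hr, hball⟩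

-- If `δ ≤ f` on `ball y r`, then `√(f x * δ) ≤ f` on the ball of radius `r / 2` around the
-- midpoint of `x` and `y`, so `f x` is controlled by `∫ f`.
theorem exists_forall_le (hf : LogConcave f) (hint : Integrable f μ) (hne : ¬ f =ᵐ[μ] 0) :
    ∃ M, ∀ x, f x ≤ M := by
  obtain ⟨δ, hδ, y, r, hr, hball⟩ := hf.exists_closedBall_subset_superlevel hne
  set v := μ.real (ball 0 (r / 2))
  have hv : 0 < v :=
    ENNReal.toReal_pos (measure_ball_pos μ 0 (half_pos hr)).ne' measure_ball_lt_top.ne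
  refine ⟨((∫ x, f x ∂μ) / v) ^ 2 / δ, fun x => ?_⟩
  have hsub : ball (midpoint ℝ x y) (r / 2) ⊆ {z | √(f x * δ) ≤ f z} := by
    intro z hz
    obtain ⟨w, hw, rfl⟩ := exists_mem_ball_midpoint_eq hz
    have := hf.nonneg x
    calc √(f x * δ) ≤ √(f x * f w) := by gcongr; exact hball (ball_subset_closedBall hw)
      _ ≤ f (midpoint ℝ x w) := hf.sqrt_mul_le x w
  have hle : √(f x * δ) * v ≤ ∫ x, f x ∂μ := by
    calc √(f x * δ) * v = √(f x * δ) * μ.real (ball (midpoint ℝ x y) (r / 2)) := by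
          rw [μ.addHaar_real_ball_center]
      _ ≤ ∫ z in ball (midpoint ℝ x y) (r / 2), f z ∂μ :=
          setIntegral_ge_of_const_le_real measurableSet_ball measure_ball_lt_top.ne hsub
            hint.integrableOn
      _ ≤ ∫ z, f z ∂μ := setIntegral_le_integral hint (ae_of_all _ hf.nonneg)
  rw [le_div_iff₀ hδ, ← Real.sq_sqrt (mul_nonneg (hf.nonneg x) hδ.le)]
  gcongr
  rwa [le_div_iff₀ hv]

theorem isBounded_superlevel (hf : LogConcave f) (hint : Integrable f μ) (hne : ¬ f =ᵐ[μ] 0)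
    {s : ℝ} (hs : 0 < s) : IsBounded {x | s ≤ f x} := by
  obtain ⟨δ, hδ, y, r, hr, hball⟩ := hf.exists_closedBall_subset_superlevel hne
  have hinterior : (interior {x | min s δ ≤ f x}).Nonempty :=
    ⟨y, mem_interior_iff_mem_nhds.2 <| mem_of_superset (closedBall_mem_nhds y hr) <|
      hball.trans fun x hx => (min_le_right s δ).trans hx⟩
  have hfinite : μ {x | min s δ ≤ f x} ≠ ⊤ := (hint.measure_ge_lt_top (lt_min hs hδ)).ne
  exact (isBounded_of_convex_of_measure_ne_top (hf.convex_superlevel _) hinterior hfinite).subset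
    fun x hx => (min_le_left s δ).trans hx

theorem exists_le_mul_exp_neg_mul_norm (hf : LogConcave f) (hint : Integrable f μ)
    (hne : ¬ f =ᵐ[μ] 0) : ∃ A, ∃ c > 0, ∀ x, f x ≤ A * Real.exp (-(c * ‖x‖)) := by
  obtain ⟨M, hM⟩ := hf.exists_forall_le hint hne
  obtain ⟨y, hy⟩ : ∃ y, 0 < f y := by
    obtain ⟨δ, hδ, y, r, hr, hball⟩ := hf.exists_closedBall_subset_superlevel hne
    exact ⟨y, hδ.trans_le (hball (mem_closedBall_self hr.le))⟩
  obtain ⟨S, hS, hbdd⟩ :=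
    (hf.isBounded_superlevel hint hne (by positivity : 0 < f y * Real.exp (-1))).subset_ball_lt 0 y
  have hsphere : ∀ z ∈ sphere y S, f z ≤ f y * Real.exp (-1) := fun z hz =>
    le_of_not_ge fun h => (mem_ball.1 (hbdd h)).ne hz
  have hdecay : ∀ x, f x ≤ M * Real.exp 1 * Real.exp (-(S⁻¹ * ‖x - y‖)) := by
    intro x
    have hM0 : 0 ≤ M := (hf.nonneg y).trans (hM y)
    rcases le_total S ‖x - y‖ with hx | hx
    · refine (hf.le_mul_exp_neg_of_le_norm_sub hy hS hsphere hx).trans ?_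
      gcongr
      exact (hM y).trans (le_mul_of_one_le_right hM0 (Real.one_le_exp zero_le_one))
    · have : S⁻¹ * ‖x - y‖ ≤ 1 := by rwa [inv_mul_le_one₀ hS]
      rw [mul_assoc, ← Real.exp_add]
      exact (hM x).trans (le_mul_of_one_le_right hM0 (Real.one_le_exp (by linarith)))
  refine ⟨M * Real.exp 1 * Real.exp (S⁻¹ * ‖y‖), S⁻¹, inv_pos.2 hS, fun x => ?_⟩
  refine (hdecay x).trans ?_
  have hM0 : 0 ≤ M := (hf.nonneg y).trans (hM y)
  rw [mul_assoc (M * _), ← Real.exp_add]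
  gcongr
  have := mul_le_mul_of_nonneg_left (norm_le_norm_sub_add x y) (inv_pos.2 hS).le
  linarith

end LogConcave

section Exponential

theorem exists_forall_le_of_exp_div_pow_le (n : ℕ) (M : ℝ) :
    ∃ L, ∀ l : ℝ, Real.exp l / l ^ n ≤ M → l ≤ L := by
  obtain ⟨L, hL⟩ :=
    eventually_atTop.1 ((Real.tendsto_exp_div_pow_atTop n).eventually_gt_atTop M)
  exact ⟨L, fun l h => le_of_not_ge fun hl => (hL l hl).not_ge h⟩

variable {E : Type*} [NormedAddCommGroup E] [NormedSpace ℝ E] [FiniteDimensional ℝ E]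
  [MeasurableSpace E] [BorelSpace E]

theorem integrable_exp_neg_mul_norm (μ : Measure E) [μ.IsAddHaarMeasure] {c : ℝ} (hc : 0 < c) :
    Integrable (fun x => Real.exp (-(c * ‖x‖))) μ := by
  rcases subsingleton_or_nontrivial E with _ | _
  · simp [Subsingleton.elim _ (0 : E)]
  rw [integrable_fun_norm_addHaar μ (f := fun r => Real.exp (-(c * r)))]
  have := integrableOn_rpow_mul_exp_neg_mul_rpow (p := 1)
    (s := ((Module.finrank ℝ E - 1 : ℕ) : ℝ)) (neg_one_lt_zero.trans_le (Nat.cast_nonneg _))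
    one_pos hc
  simpa only [Real.rpow_natCast, Real.rpow_one, neg_mul, smul_eq_mul] using this

end Exponential

section Forms

theorem eval_smul_of_isHomogeneous {σ R : Type*} [CommSemiring R] {d : ℕ} {g : MvPolynomial σ R}
    (hg : g.IsHomogeneous d) (c : R) (x : σ → R) : eval (c • x) g = c ^ d * eval x g := by
  rw [eval_eq, eval_eq, Finset.mul_sum]
  refine Finset.sum_congr rfl fun s hs => ?_
  have hs : ∑ i ∈ s.support, s i = d := by
    rw [← Finsupp.degree_apply, Finsupp.degree_eq_weight_one]
    exact hg (mem_support_iff.1 hs)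
  simp only [Pi.smul_apply, smul_eq_mul, mul_pow, Finset.prod_mul_distrib,
    Finset.prod_pow_eq_pow_sum, hs]
  ring

variable {ι : Type*} {d : ℕ}

/-- Polynomials as continuous functions on a set `K`. -/
def evalOn (K : Set (ι → ℝ)) : MvPolynomial ι ℝ →ₗ[ℝ] C(K, ℝ) where
  toFun g := ⟨fun x => eval x.1 g, (continuous_eval g).comp continuous_subtype_val⟩
  map_add' g h := by ext; simp
  map_smul' c g := by ext; simp

theorem evalOn_injective [Finite ι] {K : Set (ι → ℝ)} (hK : (interior K).Nonempty) :
    Function.Injective (evalOn K) := by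
  cases nonempty_fintype ι
  intro g h hgh
  obtain ⟨y, hy⟩ := hK
  obtain ⟨r, hr, hball⟩ := nhds_basis_closedBall.mem_iff.1 (mem_interior_iff_mem_nhds.1 hy)
  refine funext_set (fun i => closedBall (y i) r) (fun i => ?_) fun x hx => ?_
  · rw [Real.closedBall_eq_Icc]
    exact Icc_infinite (by linarith)
  · rw [← closedBall_pi y hr.le] at hx
    exact DFunLike.congr_fun hgh ⟨x, hball hx⟩

/-- The space of real forms (homogeneous polynomials) of degree `d` in variables `ι`, normed by the
maximum of `|g|` over the closed unit ball of `ι → ℝ`. It is a `def` because the submodule already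
carries the topology of coefficientwise convergence as an instance. -/
def Form (ι : Type*) (d : ℕ) : Type _ := homogeneousSubmodule ι ℝ d

namespace Form

instance : AddCommGroup (Form ι d) := inferInstanceAs (AddCommGroup (homogeneousSubmodule ι ℝ d))

instance : Module ℝ (Form ι d) := inferInstanceAs (Module ℝ (homogeneousSubmodule ι ℝ d))

/-- The restriction of forms to a set `K`, as continuous functions. -/
def restrict (K : Set (ι → ℝ)) : Form ι d →ₗ[ℝ] C(K, ℝ) :=
  (evalOn K).domRestrict (homogeneousSubmodule ι ℝ d)

theorem restrict_injective [Finite ι] {K : Set (ι → ℝ)} (hK : (interior K).Nonempty) :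
    Function.Injective (restrict K : Form ι d →ₗ[ℝ] C(K, ℝ)) :=
  (evalOn_injective hK).comp Subtype.val_injective

instance [Finite ι] : FiniteDimensional ℝ (Form ι d) :=
  Module.Finite.iff_fg.2 (homogeneousSubmodule_fg ι ℝ d)

variable [Fintype ι]

instance : NormedAddCommGroup (Form ι d) :=
  NormedAddCommGroup.induced _ _ (restrict (closedBall 0 1)) <| restrict_injective
    ⟨0, ball_subset_interior_closedBall (mem_ball_self one_pos)⟩

instance : NormedSpace ℝ (Form ι d) :=
  NormedSpace.induced ℝ _ _ (restrict (closedBall 0 1))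

instance : ProperSpace (Form ι d) := FiniteDimensional.proper ℝ _

theorem abs_eval_le_norm_mul_pow (g : Form ι d) (x : ι → ℝ) :
    |eval x g.1| ≤ ‖g‖ * ‖x‖ ^ d := by
  set u := ‖x‖⁻¹ • x
  have hu : u ∈ closedBall (0 : ι → ℝ) 1 := by
    rw [mem_closedBall_zero_iff, norm_smul, norm_inv, norm_norm]
    exact inv_mul_le_one
  have hx : ‖x‖ • u = x := by
    rcases eq_or_ne x 0 with rfl | hx
    · simp
    · exact smul_inv_smul₀ (norm_ne_zero_iff.2 hx) x
  have hgu : |eval u g.1| ≤ ‖g‖ := (restrict (closedBall 0 1) g).norm_coe_le_norm ⟨u, hu⟩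
  calc |eval x g.1| = ‖x‖ ^ d * |eval u g.1| := by
        rw [← abs_of_nonneg (pow_nonneg (norm_nonneg x) d), ← abs_mul,
          ← eval_smul_of_isHomogeneous g.2, hx]
    _ ≤ ‖g‖ * ‖x‖ ^ d := by rw [mul_comm]; gcongr

theorem exists_norm_le_mul_of_abs_eval_le {K : Set (ι → ℝ)} [CompactSpace K]
    (hK : (interior K).Nonempty) :
    ∃ B : ℝ, 0 ≤ B ∧ ∀ g : Form ι d, ∀ M, 0 ≤ M → (∀ x ∈ K, |eval x g.1| ≤ M) → ‖g‖ ≤ B * M := by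
  obtain ⟨B, -, hB⟩ := (restrict K : Form ι d →ₗ[ℝ] C(K, ℝ)).exists_antilipschitzWith
    (LinearMap.ker_eq_bot.2 (restrict_injective hK))
  refine ⟨B, B.2, fun g M hM h => ?_⟩
  calc ‖g‖ ≤ B * ‖restrict K g‖ := by simpa using hB.le_mul_dist g 0
    _ ≤ B * M := by
      gcongr
      exact (ContinuousMap.norm_le _ hM).2 fun x => h x.1 x.2

theorem continuous_eval_apply (x : ι → ℝ) : Continuous fun g : Form ι d => eval x g.1 := by
  let φ : Form ι d →ₗ[ℝ] ℝ := (aeval x).toLinearMap.domRestrict (homogeneousSubmodule ι ℝ d)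
  exact φ.continuous_of_finiteDimensional

theorem exists_pow_norm_le_eval_le (hd : Even d) (hd0 : d ≠ 0) {c : ℝ} (hc : 0 < c) :
    ∃ g : Form ι d, ∃ b > 0, ∀ x, (b * ‖x‖) ^ d ≤ eval x g.1 ∧ eval x g.1 ≤ (c * ‖x‖) ^ d := by
  set N : ℝ := Fintype.card ι + 1
  have hN : 1 ≤ N := by simp [N]
  have hpsum : (psum ι ℝ d).IsHomogeneous d :=
    IsHomogeneous.sum _ _ _ fun i _ => isHomogeneous_X_pow i d
  refine ⟨⟨C ((c / N) ^ d) * psum ι ℝ d, hpsum.C_mul _⟩, c / N, by positivity, fun x => ?_⟩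
  have heval : eval x (C ((c / N) ^ d) * psum ι ℝ d) = (c / N) ^ d * ∑ i, |x i| ^ d := by
    simp [psum, hd.pow_abs]
  rw [heval]
  constructor
  · rw [mul_pow]
    gcongr
    have hroot : ‖x‖ ≤ (∑ i, |x i| ^ d) ^ (d : ℝ)⁻¹ := by
      refine (pi_norm_le_iff_of_nonneg (by positivity)).2 fun i => ?_
      rw [Real.le_rpow_inv_iff_of_pos (norm_nonneg _) (by positivity) (by positivity),
        Real.rpow_natCast]
      exact Finset.single_le_sum (f := fun i => |x i| ^ d) (fun j _ => by positivity)
        (Finset.mem_univ i)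
    rwa [Real.le_rpow_inv_iff_of_pos (norm_nonneg _) (by positivity) (by positivity),
      Real.rpow_natCast] at hroot
  · have hsum : ∑ i, |x i| ^ d ≤ N ^ d * ‖x‖ ^ d := by
      calc ∑ i, |x i| ^ d ≤ ∑ _i : ι, ‖x‖ ^ d :=
            Finset.sum_le_sum fun i _ => by gcongr; exact norm_le_pi_norm x i
        _ = Fintype.card ι * ‖x‖ ^ d := by simp
        _ ≤ N ^ d * ‖x‖ ^ d := by
          gcongr
          exact (le_add_of_nonneg_right zero_le_one).trans (le_self_pow₀ hN hd0)
    calc (c / N) ^ d * ∑ i, |x i| ^ d ≤ (c / N) ^ d * (N ^ d * ‖x‖ ^ d) := by gcongr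
      _ = (c * ‖x‖) ^ d := by
        rw [← mul_assoc, ← mul_pow, div_mul_cancel₀ _ (by positivity), mul_pow]

end Form

end Forms

section Minimization

theorem lowerSemicontinuous_lintegral {X α : Type*} [TopologicalSpace X]
    [FirstCountableTopology X] [MeasurableSpace α] {μ : Measure α} {F : X → α → ENNReal}
    (hmeas : ∀ z, Measurable (F z)) (hF : ∀ a, LowerSemicontinuous fun z => F z a) :
    LowerSemicontinuous fun z => ∫⁻ a, F z a ∂μ := by
  refine fun z => lowerSemicontinuousAt_iff_le_liminf.2 ?_
  calc ∫⁻ a, F z a ∂μ ≤ ∫⁻ a, liminf (fun w => F w a) (𝓝 z) ∂μ :=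
        lintegral_mono fun a => lowerSemicontinuousAt_iff_le_liminf.1 (hF a z)
    _ ≤ liminf (fun w => ∫⁻ a, F w a ∂μ) (𝓝 z) := lintegral_liminf_le hmeas

theorem exists_isMinOn_of_isBounded_sublevel {X β : Type*} [PseudoMetricSpace X] [ProperSpace X]
    [LinearOrder β] {s : Set X} (hs : IsClosed s) {F : X → β} (hF : LowerSemicontinuous F) {z₀ : X}
    (hz₀ : z₀ ∈ s) (hbdd : IsBounded {z ∈ s | F z ≤ F z₀}) : ∃ z ∈ s, IsMinOn F s z := by
  have hcompact : IsCompact {z ∈ s | F z ≤ F z₀} :=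
    isCompact_of_isClosed_isBounded (hs.inter (hF.isClosed_preimage _)) hbdd
  have hnonempty : {z ∈ s | F z ≤ F z₀}.Nonempty := ⟨z₀, hz₀, le_rfl⟩
  obtain ⟨z, hz, hmin⟩ := (hF.lowerSemicontinuousOn _).exists_isMinOn hnonempty hcompact
  refine ⟨z, hz.1, fun w hw => ?_⟩
  rcases le_total (F w) (F z₀) with hle | hge
  · exact hmin ⟨hw, hle⟩
  · exact hz.2.trans hge

end Minimization

section ExpNegRoot

variable {ι : Type*} {d : ℕ}

namespace Form

/-- The function `exp (-g ^ (1 / d))` attached to a form `g` of degree `d`. For `d = 0` the exponent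
`1 / d` is `0`, and the function is the constant `exp (-1)`. -/
def expNegRoot (g : Form ι d) (x : ι → ℝ) : ℝ :=
  Real.exp (-(eval x g.1 ^ ((1 : ℝ) / d)))

theorem expNegRoot_pos (g : Form ι d) (x : ι → ℝ) : 0 < g.expNegRoot x :=
  Real.exp_pos _

theorem expNegRoot_le_one {g : Form ι d} {x : ι → ℝ} (hg : 0 ≤ eval x g.1) :
    g.expNegRoot x ≤ 1 :=
  Real.exp_le_one_iff.2 (neg_nonpos.2 (Real.rpow_nonneg hg _))

theorem expNegRoot_le_exp_neg (hd0 : d ≠ 0) {g : Form ι d} {x : ι → ℝ} {s : ℝ} (hs : 0 ≤ s)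
    (h : s ^ d ≤ eval x g.1) : g.expNegRoot x ≤ Real.exp (-s) := by
  refine Real.exp_le_exp.2 (neg_le_neg ?_)
  rwa [one_div, Real.le_rpow_inv_iff_of_pos hs ((pow_nonneg hs d).trans h) (by positivity),
    Real.rpow_natCast]

theorem exp_neg_le_expNegRoot_iff (hd0 : d ≠ 0) {g : Form ι d} {x : ι → ℝ} {s : ℝ} (hs : 0 ≤ s)
    (hg : 0 ≤ eval x g.1) : Real.exp (-s) ≤ g.expNegRoot x ↔ eval x g.1 ≤ s ^ d := by
  rw [expNegRoot, Real.exp_le_exp, neg_le_neg_iff, one_div,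
    Real.rpow_inv_le_iff_of_pos hg hs (by positivity), Real.rpow_natCast]

theorem continuous_expNegRoot (g : Form ι d) : Continuous g.expNegRoot :=
  Real.continuous_exp.comp
    ((continuous_eval g.1).rpow_const fun _ => Or.inr (by positivity)).neg

theorem expNegRoot_of_degree_zero (g : Form ι 0) (x : ι → ℝ) :
    g.expNegRoot x = Real.exp (-1) := by
  simp [expNegRoot]

variable [Fintype ι]

theorem continuous_expNegRoot_apply (x : ι → ℝ) :
    Continuous fun g : Form ι d => g.expNegRoot x :=
  Real.continuous_exp.comp
    ((continuous_eval_apply x).rpow_const fun _ => Or.inr (by positivity)).neg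

theorem lintegral_expNegRoot_lt_top (hd0 : d ≠ 0) {g : Form ι d} {b : ℝ} (hb : 0 < b)
    (hg : ∀ x, (b * ‖x‖) ^ d ≤ eval x g.1) : ∫⁻ x, ENNReal.ofReal (g.expNegRoot x) < ⊤ := by
  refine lt_of_le_of_lt (lintegral_mono fun x => ?_)
    (integrable_exp_neg_mul_norm (volume : Measure (ι → ℝ)) hb).lintegral_lt_top
  exact ENNReal.ofReal_le_ofReal (expNegRoot_le_exp_neg hd0 (by positivity) (hg x))

theorem ofReal_le_lintegral_expNegRoot {g : Form ι d} (hg : ∀ x, 0 ≤ eval x g.1) {R C : ℝ}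
    (hR : 0 ≤ R) (hC : ‖g‖ * R ^ d ≤ C) :
    ENNReal.ofReal (Real.exp (-(C ^ ((1 : ℝ) / d))) * (2 * R) ^ Fintype.card ι) ≤
      ∫⁻ x, ENNReal.ofReal (g.expNegRoot x) := by
  have hball : ∀ x ∈ closedBall (0 : ι → ℝ) R,
      Real.exp (-(C ^ ((1 : ℝ) / d))) ≤ g.expNegRoot x := by
    intro x hx
    refine Real.exp_le_exp.2 (neg_le_neg (Real.rpow_le_rpow (hg x) ?_ (by positivity)))
    calc eval x g.1 ≤ ‖g‖ * ‖x‖ ^ d := (le_abs_self _).trans (g.abs_eval_le_norm_mul_pow x)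
      _ ≤ ‖g‖ * R ^ d := by gcongr; exact mem_closedBall_zero_iff.1 hx
      _ ≤ C := hC
  calc ENNReal.ofReal (Real.exp (-(C ^ ((1 : ℝ) / d))) * (2 * R) ^ Fintype.card ι)
      = ∫⁻ _x in closedBall (0 : ι → ℝ) R, ENNReal.ofReal (Real.exp (-(C ^ ((1 : ℝ) / d)))) := by
        rw [setLIntegral_const, Real.volume_pi_closedBall _ hR,
          ENNReal.ofReal_mul (Real.exp_pos _).le]
    _ ≤ ∫⁻ x in closedBall (0 : ι → ℝ) R, ENNReal.ofReal (g.expNegRoot x) :=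
        setLIntegral_mono' measurableSet_closedBall fun x hx =>
          ENNReal.ofReal_le_ofReal (hball x hx)
    _ ≤ ∫⁻ x, ENNReal.ofReal (g.expNegRoot x) := setLIntegral_le_lintegral _ _

theorem volume_eval_le_one_lt_top {g : Form ι d} (hg : ∀ x, 0 ≤ eval x g.1)
    (hfin : ∫⁻ x, ENNReal.ofReal (g.expNegRoot x) < ⊤) : volume {x | eval x g.1 ≤ 1} < ⊤ := by
  have hsub : {x | eval x g.1 ≤ 1} ⊆
      {x | ENNReal.ofReal (Real.exp (-1)) ≤ ENNReal.ofReal (g.expNegRoot x)} := fun x hx =>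
    ENNReal.ofReal_le_ofReal <| Real.exp_le_exp.2 <| neg_le_neg <|
      Real.rpow_le_one (hg x) hx (by positivity)
  refine (measure_mono hsub).trans_lt (lt_of_le_of_lt ?_ (ENNReal.div_lt_top hfin.ne
    (ENNReal.ofReal_pos.2 (Real.exp_pos (-1))).ne'))
  exact meas_ge_le_lintegral_div g.continuous_expNegRoot.measurable.ennreal_ofReal.aemeasurable
    (ENNReal.ofReal_pos.2 (Real.exp_pos _)).ne' ENNReal.ofReal_ne_top

end Form

end ExpNegRoot

section Majorants

variable {ι : Type*} {d : ℕ} {f : (ι → ℝ) → ℝ} {t : ℝ} {g : Form ι d}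

/-- The feasible pairs `(t, g)` of the optimization problem: `g` is a nonnegative form and
`f ≤ t * exp (-g ^ (1 / d))`. -/
structure IsMajorant (f : (ι → ℝ) → ℝ) (t : ℝ) (g : Form ι d) : Prop where
  eval_nonneg : ∀ x, 0 ≤ eval x g.1
  le : ∀ x, f x ≤ t * g.expNegRoot x

/-- The objective `t * ∫ exp (-g ^ (1 / d))`, as an extended nonnegative real so that divergent
integrals have mass `⊤`. -/
def majorantMass [Fintype ι] (t : ℝ) (g : Form ι d) : ENNReal :=
  ENNReal.ofReal t * ∫⁻ x, ENNReal.ofReal (g.expNegRoot x)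

/-- The solutions of the optimization problem: `(t, g)` minimizes `majorantMass` among all feasible
pairs. -/
structure IsMinimalMajorant [Fintype ι] (f : (ι → ℝ) → ℝ) (t : ℝ) (g : Form ι d) : Prop
    extends IsMajorant f t g where
  majorantMass_le : ∀ (t' : ℝ) (g' : Form ι d), IsMajorant f t' g' →
    majorantMass t g ≤ majorantMass t' g'

namespace IsMajorant

theorem nonneg (h : IsMajorant f t g) {x : ι → ℝ} (hx : 0 ≤ f x) : 0 ≤ t :=
  nonneg_of_mul_nonneg_left (hx.trans (h.le x)) (g.expNegRoot_pos x)

theorem apply_le (h : IsMajorant f t g) {x : ι → ℝ} (hx : 0 ≤ f x) : f x ≤ t :=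
  (h.le x).trans (mul_le_of_le_one_right (h.nonneg hx) (Form.expNegRoot_le_one (h.eval_nonneg x)))

theorem eval_le_log_pow (hd0 : d ≠ 0) (h : IsMajorant f t g) {δ : ℝ} (hδ : 0 < δ) {x : ι → ℝ}
    (hx : δ ≤ f x) : eval x g.1 ≤ Real.log (t / δ) ^ d := by
  have hδt : δ ≤ t := hx.trans (h.apply_le (hδ.le.trans hx))
  have ht : 0 < t := hδ.trans_le hδt
  refine (Form.exp_neg_le_expNegRoot_iff hd0 (Real.log_nonneg ((one_le_div hδ).2 hδt))
    (h.eval_nonneg x)).1 ?_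
  rw [Real.exp_neg, Real.exp_log (by positivity), inv_div, div_le_iff₀' ht]
  exact hx.trans (h.le x)

end IsMajorant

variable [Fintype ι]

theorem isClosed_isMajorant : IsClosed {z : ℝ × Form ι d | IsMajorant f z.1 z.2} := by
  have heq : {z : ℝ × Form ι d | IsMajorant f z.1 z.2} =
      (⋂ x, {z | 0 ≤ eval x z.2.1}) ∩ ⋂ x, {z | f x ≤ z.1 * z.2.expNegRoot x} := by
    ext z
    simp only [mem_inter_iff, mem_iInter]
    exact ⟨fun h => ⟨h.1, h.2⟩, fun h => ⟨h.1, h.2⟩⟩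
  rw [heq]
  refine IsClosed.inter (isClosed_iInter fun x => ?_) (isClosed_iInter fun x => ?_)
  · exact isClosed_le continuous_const ((Form.continuous_eval_apply x).comp continuous_snd)
  · exact isClosed_le continuous_const
      (continuous_fst.mul ((Form.continuous_expNegRoot_apply x).comp continuous_snd))

theorem majorantMass_eq_lintegral (t : ℝ) (g : Form ι d) :
    majorantMass t g = ∫⁻ x, ENNReal.ofReal (t * g.expNegRoot x) := by
  simp only [fun x => ENNReal.ofReal_mul' (p := t) (g.expNegRoot_pos x).le]
  exact (lintegral_const_mul' _ _ ENNReal.ofReal_ne_top).symm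

theorem lowerSemicontinuous_majorantMass :
    LowerSemicontinuous fun z : ℝ × Form ι d => majorantMass z.1 z.2 := by
  simp only [majorantMass_eq_lintegral]
  refine lowerSemicontinuous_lintegral (fun z => ?_) fun x => Continuous.lowerSemicontinuous ?_
  · exact (z.2.continuous_expNegRoot.measurable.const_mul z.1).ennreal_ofReal
  · exact ENNReal.continuous_ofReal.comp
      (continuous_fst.mul ((Form.continuous_expNegRoot_apply x).comp continuous_snd))

-- With `l = 1 + log (t / δ)`, the bound `‖g‖ ≤ B * l ^ d` makes the integral at least a constant
-- times `l ^ (-card ι)`, whereas `t` equals `δ * exp (l - 1)`.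
theorem exists_forall_log_le_of_majorantMass_le {δ B : ℝ} (hδ : 0 < δ) {J : ENNReal} (hJ : J ≠ ⊤) :
    ∃ L, ∀ (t : ℝ) (g : Form ι d), (∀ x, 0 ≤ eval x g.1) → δ ≤ t →
      ‖g‖ ≤ B * (1 + Real.log (t / δ)) ^ d → majorantMass t g ≤ J → 1 + Real.log (t / δ) ≤ L := by
  set n := Fintype.card ι
  set κ := δ * Real.exp (-1) * Real.exp (-(B ^ ((1 : ℝ) / d))) * 2 ^ n
  have hκ : 0 < κ := by positivity
  obtain ⟨L, hL⟩ := exists_forall_le_of_exp_div_pow_le n (J.toReal / κ)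
  refine ⟨L, fun t g hg ht hnorm hmass => hL _ ?_⟩
  have ht0 : 0 < t := hδ.trans_le ht
  set l := 1 + Real.log (t / δ)
  have hl : 0 < l := add_pos_of_pos_of_nonneg one_pos (Real.log_nonneg ((one_le_div hδ).2 ht))
  have ht_eq : t = δ * (Real.exp (-1) * Real.exp l) := by
    rw [← Real.exp_add, neg_add_cancel_left, Real.exp_log (by positivity),
      mul_div_cancel₀ _ hδ.ne']
  have hint := Form.ofReal_le_lintegral_expNegRoot hg (inv_nonneg.2 hl.le) (C := B) (by
    rwa [inv_pow, ← div_eq_mul_inv, div_le_iff₀ (by positivity)])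
  have hJ_le : ENNReal.ofReal (κ * (Real.exp l / l ^ n)) ≤ J := by
    calc ENNReal.ofReal (κ * (Real.exp l / l ^ n))
        = ENNReal.ofReal t *
            ENNReal.ofReal (Real.exp (-(B ^ ((1 : ℝ) / d))) * (2 * l⁻¹) ^ n) := by
          rw [← ENNReal.ofReal_mul ht0.le, ht_eq, mul_pow, inv_pow]
          congr 1
          simp only [κ]
          ring
      _ ≤ majorantMass t g := by rw [majorantMass]; gcongr
      _ ≤ J := hmass
  rw [le_div_iff₀' hκ]
  exact (ENNReal.ofReal_le_iff_le_toReal hJ).1 hJ_le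

theorem isBounded_isMajorant_and_majorantMass_le (hd0 : d ≠ 0) {δ : ℝ} (hδ : 0 < δ) {y : ι → ℝ}
    {r : ℝ} (hr : 0 < r) (hball : closedBall y r ⊆ {x | δ ≤ f x}) {J : ENNReal} (hJ : J ≠ ⊤) :
    IsBounded {z : ℝ × Form ι d | IsMajorant f z.1 z.2 ∧ majorantMass z.1 z.2 ≤ J} := by
  have : CompactSpace (closedBall y r) := isCompact_iff_compactSpace.1 (isCompact_closedBall y r)
  obtain ⟨B, hB0, hB⟩ := Form.exists_norm_le_mul_of_abs_eval_le (d := d) (K := closedBall y r)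
    ⟨y, ball_subset_interior_closedBall (mem_ball_self hr)⟩
  obtain ⟨L, hL⟩ := exists_forall_log_le_of_majorantMass_le (ι := ι) (d := d) (B := B) hδ hJ
  refine isBounded_iff_forall_norm_le.2
    ⟨max (δ * Real.exp L) (B * L ^ d), fun ⟨t, g⟩ ⟨hmaj, hmass⟩ => ?_⟩
  have hy : δ ≤ f y := hball (mem_closedBall_self hr.le)
  have hδt : δ ≤ t := hy.trans (hmaj.apply_le (hδ.le.trans hy))
  have hlog : 0 ≤ Real.log (t / δ) := Real.log_nonneg ((one_le_div hδ).2 hδt)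
  have hnorm : ‖g‖ ≤ B * (1 + Real.log (t / δ)) ^ d := by
    refine hB g _ (by positivity) fun x hx => ?_
    rw [abs_of_nonneg (hmaj.eval_nonneg x)]
    exact (hmaj.eval_le_log_pow hd0 hδ (hball hx)).trans (by gcongr; linarith)
  have hlogL := hL t g hmaj.eval_nonneg hδt hnorm hmass
  refine max_le_max ?_ (hnorm.trans (by gcongr))
  rw [Real.norm_of_nonneg (hδ.le.trans hδt), ← div_le_iff₀' hδ,
    ← Real.log_le_iff_le_exp (div_pos (hδ.trans_le hδt) hδ)]
  linarith

theorem exists_isMajorant_of_le_exp_neg_mul_norm (hd : Even d) (hd0 : d ≠ 0)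
    {A c : ℝ} (hA : 0 ≤ A) (hc : 0 < c) (hdecay : ∀ x, f x ≤ A * Real.exp (-(c * ‖x‖))) :
    ∃ g : Form ι d, IsMajorant f A g ∧ majorantMass A g ≠ ⊤ := by
  obtain ⟨g, b, hb, hg⟩ := Form.exists_pow_norm_le_eval_le (ι := ι) hd hd0 hc
  have hg0 : ∀ x, 0 ≤ eval x g.1 := fun x => (hd.pow_nonneg _).trans (hg x).1
  refine ⟨g, ⟨hg0, fun x => (hdecay x).trans ?_⟩, ?_⟩
  · gcongr
    exact (Form.exp_neg_le_expNegRoot_iff hd0 (by positivity) (hg0 x)).2 (hg x).2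
  · exact ENNReal.mul_ne_top ENNReal.ofReal_ne_top
      (Form.lintegral_expNegRoot_lt_top hd0 hb fun x => (hg x).1).ne

theorem IsMajorant.volume_eval_le_one_lt_top (h : IsMajorant f t g) (ht : 0 < t)
    (hmass : majorantMass t g ≠ ⊤) : volume {x | eval x g.1 ≤ 1} < ⊤ :=
  Form.volume_eval_le_one_lt_top h.eval_nonneg <|
    ENNReal.lt_top_of_mul_ne_top_right hmass (ENNReal.ofReal_pos.2 ht).ne'

theorem exists_isMinimalMajorant (hd : Even d) (hd0 : d ≠ 0)
    {δ : ℝ} (hδ : 0 < δ) {y : ι → ℝ} {r : ℝ} (hr : 0 < r)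
    (hball : closedBall y r ⊆ {x | δ ≤ f x}) {A c : ℝ} (hc : 0 < c)
    (hdecay : ∀ x, f x ≤ A * Real.exp (-(c * ‖x‖))) :
    ∃ (t₁ : ℝ) (g₁ : Form ι d), IsMinimalMajorant f t₁ g₁ ∧ volume {x | eval x g₁.1 ≤ 1} < ⊤ := by
  have hy : δ ≤ f y := hball (mem_closedBall_self hr.le)
  have hA : 0 ≤ A := nonneg_of_mul_nonneg_left ((hδ.le.trans hy).trans (hdecay y)) (Real.exp_pos _)
  obtain ⟨g₀, hg₀, hmass₀⟩ := exists_isMajorant_of_le_exp_neg_mul_norm hd hd0 hA hc hdecay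
  obtain ⟨⟨t₁, g₁⟩, hmaj, hmin⟩ := exists_isMinOn_of_isBounded_sublevel isClosed_isMajorant
    lowerSemicontinuous_majorantMass (z₀ := (A, g₀)) hg₀
    (isBounded_isMajorant_and_majorantMass_le hd0 hδ hr hball hmass₀)
  have ht₁ : 0 < t₁ := hδ.trans_le (hy.trans (hmaj.apply_le (hδ.le.trans hy)))
  have hle : ∀ (t : ℝ) (g : Form ι d), IsMajorant f t g → majorantMass t₁ g₁ ≤ majorantMass t g :=
    fun t g h => isMinOn_iff.1 hmin (t, g) h
  exact ⟨t₁, g₁, ⟨hmaj, hle⟩,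
    hmaj.volume_eval_le_one_lt_top ht₁ (ne_top_of_le_ne_top hmass₀ (hle A g₀ hg₀))⟩

-- All forms of degree `0` have the same `expNegRoot`, so only `t` is optimized; the constant `2` is
-- chosen so that its sublevel set at level `1` is empty.
theorem exists_isMinimalMajorant_of_degree_zero {M : ℝ} (hM : ∀ x, f x ≤ M) :
    ∃ (t₁ : ℝ) (g₁ : Form ι 0), IsMinimalMajorant f t₁ g₁ ∧ volume {x | eval x g₁.1 ≤ 1} < ⊤ := by
  have hbdd : BddAbove (range f) := ⟨M, forall_mem_range.2 hM⟩
  obtain ⟨g₁, hg₁⟩ : ∃ g : Form ι 0, ∀ x, eval x g.1 = 2 :=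
    ⟨⟨C 2, isHomogeneous_C ι 2⟩, fun _ => eval_C 2⟩
  refine ⟨(⨆ x, f x) * Real.exp 1, g₁,
    ⟨⟨fun x => by simp [hg₁], fun x => ?_⟩, fun t g h => ?_⟩, by simp [hg₁]⟩
  · rw [Form.expNegRoot_of_degree_zero, mul_assoc, ← Real.exp_add, add_neg_cancel, Real.exp_zero,
      mul_one]
    exact le_ciSup hbdd x
  · have hsup : ⨆ x, f x ≤ t * Real.exp (-1) :=
      ciSup_le fun x => (h.le x).trans_eq (by rw [g.expNegRoot_of_degree_zero])
    simp only [majorantMass, Form.expNegRoot_of_degree_zero]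
    gcongr
    rwa [← le_div_iff₀ (Real.exp_pos 1), div_eq_mul_inv, ← Real.exp_neg]

theorem stmt_0_general (hd : Even d) (hf : LogConcave f) (hint : Integrable f)
    (hne : ¬ f =ᵐ[volume] 0) :
    ∃ (t₁ : ℝ) (g₁ : Form ι d), IsMinimalMajorant f t₁ g₁ ∧ volume {x | eval x g₁.1 ≤ 1} < ⊤ := by
  rcases eq_or_ne d 0 with rfl | hd0
  · obtain ⟨M, hM⟩ := hf.exists_forall_le hint hne
    exact exists_isMinimalMajorant_of_degree_zero hM
  · obtain ⟨δ, hδ, y, r, hr, hball⟩ := hf.exists_closedBall_subset_superlevel hne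
    obtain ⟨A, c, hc, hdecay⟩ := hf.exists_le_mul_exp_neg_mul_norm hint hne
    exact exists_isMinimalMajorant hd hd0 hδ hr hball hc hdecay

end Majorants

/-- Existence of a solution of Problem 1 (Theorem 1.2 of the paper): for an integrable
log-concave `f` with `‖f‖_∞ = f 0 = 1` there is a pair `(t₁, g₁)` with `t₁ ≥ 1` and `g₁` a
nonnegative `d`-homogeneous polynomial with `|G₁(g₁)| < ∞`, such that
`f ≤ t₁ exp(-g₁^{1/d})` and `t₁ ∫ exp(-g₁^{1/d})` is minimal among all such pairs. -/
theorem stmt_0 (n d : ℕ) (hn : 1 ≤ n) (hd : Even d)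
    (f : (Fin n → ℝ) → ℝ) (hf_nonneg : ∀ x, 0 ≤ f x)
    (hf_int : Integrable f) (hf_pos : 0 < ∫ x, f x)
    (hf_lc : ∀ x y : Fin n → ℝ, ∀ θ : ℝ, 0 ≤ θ → θ ≤ 1 →
      f x ^ (1 - θ) * f y ^ θ ≤ f ((1 - θ) • x + θ • y))
    (hf_le : ∀ x, f x ≤ 1) (hf0 : f 0 = 1) :
    ∃ (t₁ : ℝ) (g₁ : MvPolynomial (Fin n) ℝ),
      1 ≤ t₁ ∧ g₁.IsHomogeneous d ∧ (∀ x, 0 ≤ MvPolynomial.eval x g₁) ∧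
      volume (G1 g₁) < ⊤ ∧
      (∀ x, f x ≤ t₁ * Real.exp (-(MvPolynomial.eval x g₁ ^ ((1 : ℝ) / d)))) ∧
      ∀ (t : ℝ) (g : MvPolynomial (Fin n) ℝ), 1 ≤ t → g.IsHomogeneous d →
        (∀ x, 0 ≤ MvPolynomial.eval x g) →
        (∀ x, f x ≤ t * Real.exp (-(MvPolynomial.eval x g ^ ((1 : ℝ) / d)))) →
        ENNReal.ofReal t₁ *
            (∫⁻ x, ENNReal.ofReal (Real.exp (-(MvPolynomial.eval x g₁ ^ ((1 : ℝ) / d))))) ≤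
          ENNReal.ofReal t *
            (∫⁻ x, ENNReal.ofReal (Real.exp (-(MvPolynomial.eval x g ^ ((1 : ℝ) / d))))) := by
  obtain ⟨t₁, g₁, hmin, hvol⟩ := stmt_0_general (d := d) hd ⟨hf_nonneg, hf_lc⟩ hf_int
    fun h => hf_pos.ne' (integral_eq_zero_of_ae h)
  exact ⟨t₁, g₁.1, hf0 ▸ hmin.apply_le (hf_nonneg 0), g₁.2, hmin.eval_nonneg, hvol, hmin.le,
    fun t g _ hg hg0 hle => hmin.majorantMass_le t ⟨g, hg⟩ ⟨hg0, hle⟩⟩
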